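/- arXiv:0808.0667 — 3 statements merged into one kernel-verified Lean document; each statement's English description precedes it below -/
import Mathlib

section
/- Let L be a real Lie algebra and B : L → L → ℝ a symmetric bilinear form that is invariant, i.e. B(⁅x,y⁆, z) = B(x, ⁅y,z⁆) for all x, y, z in L. Let φ₁, φ₂, φ₃ : Fin 4 → Fin 4 → L be antisymmetric matrices (φ i j = −φ j i). Then Σ_{a,j,k : Fin 4} B(φ₁ j k, ⁅φ₂ a j, φ₃ a k⁆) = Σ_{a,j,k : Fin 4} B(φ₃ j k, ⁅φ₁ a j, φ₂ a k⁆). -/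
/-! Symmetry and invariance make `B x ⁅y, z⁆` invariant under cyclic permutations of `x, y, z`.
Transposing both `φ₂` and `φ₃` costs two signs, which cancel in the bracket; afterwards the index
pairs also form a cycle, and the two sums differ by the relabelling `(a, j, k) ↦ (j, k, a)`. -/

theorem apply_lie_cyclic {L M : Type*} [Bracket L L] {B : L → L → M}
    (hsym : ∀ x y, B x y = B y x) (hinv : ∀ x y z, B ⁅x, y⁆ z = B x ⁅y, z⁆) (x y z : L) :
    B x ⁅y, z⁆ = B z ⁅x, y⁆ :=
  (hinv x y z).symm.trans (hsym ⁅x, y⁆ z)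

theorem cyclic_symmetry_triple_product_general {ι L M : Type*} [Fintype ι] [LieRing L]
    [AddCommMonoid M] {B : L → L → M}
    (hsym : ∀ x y, B x y = B y x) (hinv : ∀ x y z, B ⁅x, y⁆ z = B x ⁅y, z⁆)
    (φ₁ : ι → ι → L) {φ₂ φ₃ : ι → ι → L}
    (h₂ : ∀ i j, φ₂ i j = -φ₂ j i) (h₃ : ∀ i j, φ₃ i j = -φ₃ j i) :
    ∑ a, ∑ j, ∑ k, B (φ₁ j k) ⁅φ₂ a j, φ₃ a k⁆ =
      ∑ a, ∑ j, ∑ k, B (φ₃ j k) ⁅φ₁ a j, φ₂ a k⁆ := by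
  have summand_rotate (a j k : ι) :
      B (φ₁ j k) ⁅φ₂ a j, φ₃ a k⁆ = B (φ₃ k a) ⁅φ₁ j k, φ₂ j a⁆ :=
    calc
      B (φ₁ j k) ⁅φ₂ a j, φ₃ a k⁆
      _ = B (φ₁ j k) ⁅φ₂ j a, φ₃ k a⁆ := by rw [h₂ a j, h₃ a k, neg_lie, lie_neg, neg_neg]
      _ = B (φ₃ k a) ⁅φ₁ j k, φ₂ j a⁆ := apply_lie_cyclic hsym hinv _ _ _
  calc
    ∑ a, ∑ j, ∑ k, B (φ₁ j k) ⁅φ₂ a j, φ₃ a k⁆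
    _ = ∑ a, ∑ j, ∑ k, B (φ₃ k a) ⁅φ₁ j k, φ₂ j a⁆ := by simp only [summand_rotate]
    _ = ∑ j, ∑ k, ∑ a, B (φ₃ k a) ⁅φ₁ j k, φ₂ j a⁆ := Finset.sum_comm_cycle.symm

/-- Cyclic-symmetry assertion of Lemma 3.1: for an invariant symmetric bilinear
form `B` on a real Lie algebra `L` and antisymmetric matrices `φ₁ φ₂ φ₃` of
components of `L`-valued 2-forms,
`∑ ⟨φ₁, i_{e_a}φ₂ ∧ i_{e_a}φ₃⟩ = ∑ ⟨φ₃, i_{e_a}φ₁ ∧ i_{e_a}φ₂⟩`. -/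
theorem cyclic_symmetry_triple_product
    {L : Type*} [LieRing L] [LieAlgebra ℝ L]
    (B : L →ₗ[ℝ] L →ₗ[ℝ] ℝ)
    (hsym : ∀ x y, B x y = B y x)
    (hinv : ∀ x y z, B ⁅x, y⁆ z = B x ⁅y, z⁆)
    (φ₁ φ₂ φ₃ : Fin 4 → Fin 4 → L)
    (h1 : ∀ i j, φ₁ i j = -φ₁ j i)
    (h2 : ∀ i j, φ₂ i j = -φ₂ j i)
    (h3 : ∀ i j, φ₃ i j = -φ₃ j i) :
    ∑ a : Fin 4, ∑ j : Fin 4, ∑ k : Fin 4, B (φ₁ j k) ⁅φ₂ a j, φ₃ a k⁆ =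
    ∑ a : Fin 4, ∑ j : Fin 4, ∑ k : Fin 4, B (φ₃ j k) ⁅φ₁ a j, φ₂ a k⁆ :=
  cyclic_symmetry_triple_product_general (B := fun x y ↦ B x y) hsym hinv φ₁ h2 h3
end

section
/- Let L be a Lie ring, B : L → L → ℝ any bilinear form, F⁺ : Fin 4 → Fin 4 → L antisymmetric and self-dual (F⁺ 0 1 = F⁺ 2 3, F⁺ 0 2 = F⁺ 3 1, F⁺ 0 3 = F⁺ 1 2), and F⁻ : Fin 4 → Fin 4 → L antisymmetric and anti-self-dual (F⁻ 0 1 = −F⁻ 2 3, F⁻ 0 2 = −F⁻ 3 1, F⁻ 0 3 = −F⁻ 1 2). Then Σ_{a,j,k : Fin 4} B(F⁺ j k, ⁅F⁻ a j, F⁻ a k⁆) = 0. -/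
/-!
Contracting an anti-self-dual form with itself gives an anti-self-dual form: both
`∑ a, ⁅F a 0, F a 1⁆` and `-∑ a, ⁅F a 2, F a 3⁆` reduce to `-2 • ⁅F 0 2, F 0 3⁆`, and the other two
components follow by cyclically permuting `1, 2, 3`. Self-dual and anti-self-dual forms are
orthogonal.

Skew-symmetry only makes the diagonal entries of `F` 2-torsion, so the contraction is shown to be
anti-self-dual after doubling. This is enough, as a sum over all `j, k` counts each plane twice.
-/

section Duality

variable {V W M : Type*} [AddCommGroup V] [AddCommGroup W] [AddCommGroup M]

/-- Self-duality of a vector-valued 2-form on an oriented Euclidean 4-space, given by its components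
in an oriented orthonormal coframe. Skew-symmetry of the components is not part of the notion. -/
structure IsSelfDual (F : Fin 4 → Fin 4 → V) : Prop where
  eq_zero_one : F 0 1 = F 2 3
  eq_zero_two : F 0 2 = F 3 1
  eq_zero_three : F 0 3 = F 1 2

/-- Anti-self-duality of a vector-valued 2-form on an oriented Euclidean 4-space, with the
conventions of `IsSelfDual`. -/
structure IsAntiSelfDual (F : Fin 4 → Fin 4 → V) : Prop where
  eq_zero_one : F 0 1 = -F 2 3
  eq_zero_two : F 0 2 = -F 3 1
  eq_zero_three : F 0 3 = -F 1 2

/-- The pointwise inner product of two vector-valued 2-forms on a Euclidean 4-space, with values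
paired by `B`: each of the six coordinate planes is counted once, oriented as in the equations of
`IsSelfDual`. -/
def twoFormPairing (B : V →+ W →+ M) (S : Fin 4 → Fin 4 → V) (T : Fin 4 → Fin 4 → W) : M :=
  B (S 0 1) (T 0 1) + B (S 0 2) (T 0 2) + B (S 0 3) (T 0 3) +
    B (S 2 3) (T 2 3) + B (S 3 1) (T 3 1) + B (S 1 2) (T 1 2)

theorem twoFormPairing_eq_zero (B : V →+ W →+ M) {S : Fin 4 → Fin 4 → V} {T : Fin 4 → Fin 4 → W}
    (hS : IsSelfDual S) (hT : IsAntiSelfDual T) : twoFormPairing B S T = 0 := by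
  simp only [twoFormPairing, hS.eq_zero_one, hS.eq_zero_two, hS.eq_zero_three,
    hT.eq_zero_one, hT.eq_zero_two, hT.eq_zero_three, map_neg]
  abel

theorem sum_sum_eq_twoFormPairing_two_nsmul (B : V →+ W →+ M)
    {S : Fin 4 → Fin 4 → V} {T : Fin 4 → Fin 4 → W} (hS : ∀ j k, S j k = -S k j)
    (hT : ∀ j k, T j k = -T k j) (hT_diag : ∀ j, T j j = 0) :
    ∑ j, ∑ k, B (S j k) (T j k) = twoFormPairing B S (2 • T) := by
  have symm (j k) : B (S j k) (T j k) = B (S k j) (T k j) := by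
    rw [hS j k, hT j k, map_neg, map_neg, AddMonoidHom.neg_apply, neg_neg]
  simp only [twoFormPairing, Fin.sum_univ_four, hT_diag, map_zero, Pi.smul_apply, map_nsmul,
    symm 1 0, symm 2 0, symm 3 0, symm 3 2, symm 1 3, symm 2 1]
  abel

end Duality

section BracketContraction

variable {ι L : Type*} [Fintype ι] [LieRing L]

/-- The components of the `L`-valued 2-form `½ ∑ a, i_{e_a}F ∧ i_{e_a}F` in an orthonormal coframe,
where the wedge product uses the Lie bracket. -/
def bracketContraction (F : ι → ι → L) (j k : ι) : L :=
  ∑ a, ⁅F a j, F a k⁆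

theorem bracketContraction_self (F : ι → ι → L) (j : ι) : bracketContraction F j j = 0 := by
  simp only [bracketContraction, lie_self, Finset.sum_const_zero]

theorem bracketContraction_skew (F : ι → ι → L) (j k : ι) :
    bracketContraction F j k = -bracketContraction F k j := by
  simp only [bracketContraction, ← Finset.sum_neg_distrib, lie_skew]

variable [DecidableEq ι] {F : ι → ι → L}

theorem two_nsmul_bracketContraction_eq_sum_compl (hF : ∀ i j, F i j = -F j i) (j k : ι) :
    2 • bracketContraction F j k = 2 • ∑ a ∈ {j, k}ᶜ, ⁅F a j, F a k⁆ := by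
  have two_nsmul_diag (i) : 2 • F i i = 0 := by
    rw [two_nsmul, add_eq_zero_iff_eq_neg]
    exact hF i i
  simp only [bracketContraction, Finset.smul_sum]
  refine (Finset.sum_subset (Finset.subset_univ _) fun a _ ha ↦ ?_).symm
  obtain rfl | rfl : a = j ∨ a = k := by simpa [or_iff_not_imp_left] using ha
  · rw [← nsmul_lie, two_nsmul_diag, zero_lie]
  · rw [← lie_nsmul, two_nsmul_diag, lie_zero]

theorem two_nsmul_bracketContraction_eq_neg (hF : ∀ i j, F i j = -F j i) {p q r s : ι}
    (hpq : p ≠ q) (hrs : r ≠ s) (hcompl : ({p, q}ᶜ : Finset ι) = {r, s})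
    (hpr : F p r = -F s q) (hps : F p s = -F q r) :
    (2 • bracketContraction F p q : L) = -(2 • bracketContraction F r s) := by
  have hcompl' : ({r, s}ᶜ : Finset ι) = {p, q} := by rw [← hcompl, compl_compl]
  have hsq : F s q = -F p r := by rw [hpr, neg_neg]
  have hqr : F q r = -F p s := by rw [hps, neg_neg]
  have sum_pq : ∑ a ∈ {p, q}ᶜ, ⁅F a p, F a q⁆ = -(2 • ⁅F p r, F p s⁆) := by
    rw [hcompl, Finset.sum_pair hrs, hF r p, hF r q, hF s p, hqr, hsq, neg_neg, neg_lie, neg_lie,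
      lie_neg, ← lie_skew (F p s)]
    abel
  have sum_rs : ∑ a ∈ {r, s}ᶜ, ⁅F a r, F a s⁆ = 2 • ⁅F p r, F p s⁆ := by
    rw [hcompl', Finset.sum_pair hpq, hF q s, hqr, hsq, neg_neg, neg_lie, lie_skew, two_nsmul]
  rw [two_nsmul_bracketContraction_eq_sum_compl hF, two_nsmul_bracketContraction_eq_sum_compl hF,
    sum_pq, sum_rs, smul_neg]

end BracketContraction

theorem IsAntiSelfDual.two_nsmul_bracketContraction {L : Type*} [LieRing L]
    {F : Fin 4 → Fin 4 → L} (h : IsAntiSelfDual F) (hF : ∀ i j, F i j = -F j i) :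
    IsAntiSelfDual (2 • bracketContraction F) where
  eq_zero_one := two_nsmul_bracketContraction_eq_neg hF (by decide) (by decide) (by decide)
    h.eq_zero_two h.eq_zero_three
  eq_zero_two := two_nsmul_bracketContraction_eq_neg hF (by decide) (by decide) (by decide)
    h.eq_zero_three h.eq_zero_one
  eq_zero_three := two_nsmul_bracketContraction_eq_neg hF (by decide) (by decide) (by decide)
    h.eq_zero_one h.eq_zero_two

theorem selfDual_pair_antiSelfDual_bracket_sum_eq_zero_general
    {V L M : Type*} [AddCommGroup V] [LieRing L] [AddCommGroup M] (B : V →+ L →+ M)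
    {Fp : Fin 4 → Fin 4 → V} {Fm : Fin 4 → Fin 4 → L}
    (hp : ∀ i j, Fp i j = -Fp j i) (hp_dual : IsSelfDual Fp)
    (hm : ∀ i j, Fm i j = -Fm j i) (hm_dual : IsAntiSelfDual Fm) :
    ∑ a, ∑ j, ∑ k, B (Fp j k) ⁅Fm a j, Fm a k⁆ = 0 := by
  calc ∑ a, ∑ j, ∑ k, B (Fp j k) ⁅Fm a j, Fm a k⁆
      = ∑ j, ∑ k, B (Fp j k) (bracketContraction Fm j k) := by
        simp only [bracketContraction, map_sum]
        rw [Finset.sum_comm]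
        exact Finset.sum_congr rfl fun j _ ↦ Finset.sum_comm
    _ = twoFormPairing B Fp (2 • bracketContraction Fm) :=
        sum_sum_eq_twoFormPairing_two_nsmul B hp (bracketContraction_skew Fm)
          (bracketContraction_self Fm)
    _ = 0 := twoFormPairing_eq_zero B hp_dual (hm_dual.two_nsmul_bracketContraction hm)

/-- The pairing of a self-dual form with `∑ a, i_{e_a}F⁻ ∧ i_{e_a}F⁻`
(which is anti-self-dual) vanishes:
`∑_{a,j,k} B(F⁺ j k, ⁅F⁻ a j, F⁻ a k⁆) = 0`. -/
theorem selfDual_pair_antiSelfDual_bracket_sum_eq_zero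
    {L : Type*} [LieRing L] (B : L →+ L →+ ℝ)
    (Fp Fm : Fin 4 → Fin 4 → L)
    (hp : ∀ i j, Fp i j = -Fp j i)
    (hp01 : Fp 0 1 = Fp 2 3) (hp02 : Fp 0 2 = Fp 3 1) (hp03 : Fp 0 3 = Fp 1 2)
    (hm : ∀ i j, Fm i j = -Fm j i)
    (hm01 : Fm 0 1 = -Fm 2 3) (hm02 : Fm 0 2 = -Fm 3 1) (hm03 : Fm 0 3 = -Fm 1 2) :
    ∑ a : Fin 4, ∑ j : Fin 4, ∑ k : Fin 4, B (Fp j k) ⁅Fm a j, Fm a k⁆ = 0 :=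
  selfDual_pair_antiSelfDual_bracket_sum_eq_zero_general B
    hp ⟨hp01, hp02, hp03⟩ hm ⟨hm01, hm02, hm03⟩
end

section
/- Let L be a real Lie algebra and let F : Fin 3 → Fin 3 → L be antisymmetric (F i j = −F j i). Define ψ : Fin 3 → L by ψ 0 = F 1 2, ψ 1 = F 2 0, ψ 2 = F 0 1 (the components of the Hodge dual 1-form ∗F in three dimensions). Suppose that for every t : Fin 3 one has Σ_{s : Fin 3} ⁅ψ s, F s t⁆ = 0. Then ⁅F i j, F s t⁆ = 0 for all i, j, s, t : Fin 3, i.e. the components of F pairwise commute. -/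
/-! In three dimensions every off-diagonal component of `F` is, up to sign, a component of `∗F`. The
sum `∑ s, ⁅(∗F) s, F s t⁆` therefore has only two nonzero terms, and they are equal: both are the
bracket of the two components of `∗F` other than `(∗F) t`. Once `2` can be cancelled, the components
of `∗F` commute, and with them those of `F`. -/

/-- The components of the Hodge dual 1-form of a 2-form with components `F` in an oriented
orthonormal coframe of a 3-dimensional space. Indices are added in `Fin 3`, hence modulo `3`, so
that the three components `F 1 2`, `F 2 0`, `F 0 1` are given by one cyclic formula. -/
def hodgeDual {A : Type*} (F : Fin 3 → Fin 3 → A) : Fin 3 → A :=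
  fun k ↦ F (k + 1) (k + 2)

theorem fin_three_eq_or_eq_add_one_or_eq_add_two (i j : Fin 3) : j = i ∨ j = i + 1 ∨ j = i + 2 := by
  lia

theorem sum_fin_three_eq_cyclic {M : Type*} [AddCommMonoid M] (f : Fin 3 → M) (t : Fin 3) :
    ∑ s, f s = f t + f (t + 1) + f (t + 2) := by
  rw [← Equiv.sum_comp (Equiv.addLeft t), Fin.sum_univ_three]
  simp only [Equiv.coe_addLeft, add_zero]

theorem hodgeDual_add_one {A : Type*} (F : Fin 3 → Fin 3 → A) (k : Fin 3) :
    hodgeDual F (k + 1) = F (k + 2) k :=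
  congrArg₂ F (by lia) (by lia)

theorem hodgeDual_add_two {A : Type*} (F : Fin 3 → Fin 3 → A) (k : Fin 3) :
    hodgeDual F (k + 2) = F k (k + 1) :=
  congrArg₂ F (by lia) (by lia)

theorem exists_eq_zsmul_hodgeDual {A : Type*} [AddCommGroup A] {F : Fin 3 → Fin 3 → A}
    (hanti : ∀ i j, F i j = -F j i) (hdiag : ∀ i, F i i = 0) (i j : Fin 3) :
    ∃ (n : ℤ) (k : Fin 3), F i j = n • hodgeDual F k := by
  obtain rfl | rfl | rfl := fin_three_eq_or_eq_add_one_or_eq_add_two i j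
  · exact ⟨0, j, by rw [hdiag, zero_smul]⟩
  · exact ⟨1, i + 2, by rw [hodgeDual_add_two, one_smul]⟩
  · exact ⟨-1, i + 1, by rw [hodgeDual_add_one, neg_one_smul, hanti]⟩

section LieRing

variable {L : Type*} [LieRing L]

theorem sum_lie_hodgeDual {F : Fin 3 → Fin 3 → L}
    (hanti : ∀ i j, F i j = -F j i) (hdiag : ∀ i, F i i = 0) (t : Fin 3) :
    ∑ s, ⁅hodgeDual F s, F s t⁆ = 2 • ⁅hodgeDual F (t + 2), hodgeDual F (t + 1)⁆ := by
  have next : F (t + 1) t = -hodgeDual F (t + 2) := by rw [hodgeDual_add_two, hanti]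
  have prev : F (t + 2) t = hodgeDual F (t + 1) := (hodgeDual_add_one F t).symm
  rw [sum_fin_three_eq_cyclic _ t, hdiag, next, prev, lie_zero, zero_add, lie_neg, lie_skew,
    two_nsmul]

theorem lie_eq_zero_of_forall_lie_add_two_add_one {ψ : Fin 3 → L}
    (h : ∀ t, ⁅ψ (t + 2), ψ (t + 1)⁆ = 0) (k l : Fin 3) : ⁅ψ k, ψ l⁆ = 0 := by
  have succ_lie (k : Fin 3) : ⁅ψ (k + 1), ψ k⁆ = 0 := by
    simpa only [show k + 2 + 2 = k + 1 by lia, show k + 2 + 1 = k by lia] using h (k + 2)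
  obtain rfl | rfl | rfl := fin_three_eq_or_eq_add_one_or_eq_add_two k l
  · exact lie_self _
  · rw [← lie_skew, succ_lie, neg_zero]
  · simpa only [show k + 2 + 1 = k by lia] using succ_lie (k + 2)

theorem threeDim_curvature_components_commute_general (two_regular : IsSMulRegular L (2 : ℕ))
    {F : Fin 3 → Fin 3 → L} (hanti : ∀ i j, F i j = -F j i)
    (h : ∀ t, ∑ s, ⁅hodgeDual F s, F s t⁆ = 0) (i j s t : Fin 3) :
    ⁅F i j, F s t⁆ = 0 := by
  have hdiag (i : Fin 3) : F i i = 0 :=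
    two_regular.right_eq_zero_of_smul (by rw [two_nsmul, add_eq_zero_iff_eq_neg, ← hanti])
  have dual_commute : ∀ k l, ⁅hodgeDual F k, hodgeDual F l⁆ = 0 :=
    lie_eq_zero_of_forall_lie_add_two_add_one fun t ↦
      two_regular.right_eq_zero_of_smul (by rw [← sum_lie_hodgeDual hanti hdiag, h])
  obtain ⟨m, k, hk⟩ := exists_eq_zsmul_hodgeDual hanti hdiag i j
  obtain ⟨n, l, hl⟩ := exists_eq_zsmul_hodgeDual hanti hdiag s t
  rw [hk, hl, zsmul_lie, lie_zsmul, dual_commute, smul_zero, smul_zero]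

end LieRing

/-- Algebraic step in the proof of Theorem 1.3: in three dimensions, if
`ψ = ∗F` (so `ψ 0 = F 1 2`, `ψ 1 = F 2 0`, `ψ 2 = F 0 1`) and
`∑ s, ⁅ψ s, F s t⁆ = 0` for all `t`, then the components of `F` pairwise
commute. -/
theorem threeDim_curvature_components_commute
    {L : Type*} [LieRing L] [LieAlgebra ℝ L]
    (F : Fin 3 → Fin 3 → L)
    (hanti : ∀ i j, F i j = -F j i)
    (ψ : Fin 3 → L)
    (hψ0 : ψ 0 = F 1 2) (hψ1 : ψ 1 = F 2 0) (hψ2 : ψ 2 = F 0 1)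
    (h : ∀ t : Fin 3, ∑ s : Fin 3, ⁅ψ s, F s t⁆ = 0) :
    ∀ i j s t : Fin 3, ⁅F i j, F s t⁆ = 0 := by
  obtain rfl : ψ = hodgeDual F :=
    funext (Fin.forall_fin_succ.2 ⟨hψ0, Fin.forall_fin_two.2 ⟨hψ1, hψ2⟩⟩)
  have : IsAddTorsionFree L := .of_isTorsionFree ℝ L
  exact threeDim_curvature_components_commute_general (IsSMulRegular.of_ne_zero two_ne_zero) hanti h
end
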